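/- arXiv:1907.09405 — 2 statements merged into one kernel-verified Lean document; each statement's English description precedes it below -/
import Mathlib

section
/- With high probability there do not exist a color i ∈ [q] and sets S ⊆ A, T ⊆ B with |S|, |T| ≥ βn/10 such that e_i(S,T) = 0. -/
open MeasureTheory Filter Finset Asymptotics

/-- Discrete measurable structure on edge states: `none` = non-edge, `some i` = edge of color `cᵢ`. -/
instance (q : ℕ) : MeasurableSpace (Option (Fin q)) := ⊤

/-- Distribution of the state of a single pair: non-edge with probability `1-p`,
an edge of color `cᵢ` with probability `αᵢ·p`. -/
noncomputable def colorM (q : ℕ) (α : Fin q → ℝ) (p : ℝ) : Measure (Option (Fin q)) :=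
  ENNReal.ofReal (1 - p) • Measure.dirac none +
    ∑ i : Fin q, ENNReal.ofReal (α i * p) • Measure.dirac (some i)

/-- The randomly colored random bipartite graph on parts `A = B = Fin n`:
independently, each pair `(a,b)` is a non-edge with probability `1-p` and an
edge of color `cᵢ` with probability `αᵢ·p`.  A sample is a function
`f : Fin n × Fin n → Option (Fin q)`. -/
noncomputable def graphM (n q : ℕ) (α : Fin q → ℝ) (p : ℝ) :
    Measure (Fin n × Fin n → Option (Fin q)) :=
  Measure.pi fun _ => colorM q α p

/-!
A fixed pair `S`, `T` spans no edge of color `cᵢ` with probability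
`(1 - αᵢp)^(|S||T|) ≤ exp (-αᵢp|S||T|)`. There are at most `4ⁿ` such pairs, so when
`|S|, |T| ≥ δn` the union bound gives `(4 exp (-αᵢδ²np))ⁿ`, which tends to `0` as soon as
`np → ∞`.
-/

instance (q : ℕ) : DiscreteMeasurableSpace (Option (Fin q)) := ⟨fun _ => trivial⟩

section Graph

variable {n q : ℕ} {α : Fin q → ℝ} {p : ℝ}

theorem isProbabilityMeasure_colorM (hα : ∀ i, 0 ≤ α i) (hsum : ∑ i, α i = 1)
    (hp0 : 0 ≤ p) (hp1 : p ≤ 1) : IsProbabilityMeasure (colorM q α p) := by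
  constructor
  simp only [colorM, Measure.coe_add, Pi.add_apply, Measure.smul_apply, Measure.finsetSum_apply,
    measure_univ, smul_eq_mul, mul_one]
  rw [← ENNReal.ofReal_sum_of_nonneg fun i _ => mul_nonneg (hα i) hp0, ← Finset.sum_mul, hsum,
    one_mul, ← ENNReal.ofReal_add (sub_nonneg.2 hp1) hp0, sub_add_cancel, ENNReal.ofReal_one]

theorem colorM_singleton_some (α : Fin q → ℝ) (p : ℝ) (i : Fin q) :
    colorM q α p {some i} = ENNReal.ofReal (α i * p) := by
  simp [colorM, Set.indicator_apply]

instance isProbabilityMeasure_graphM [IsProbabilityMeasure (colorM q α p)] :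
    IsProbabilityMeasure (graphM n q α p) :=
  inferInstanceAs (IsProbabilityMeasure (Measure.pi _))

theorem colorM_compl_singleton_some_le [IsProbabilityMeasure (colorM q α p)] (i : Fin q) :
    colorM q α p {some i}ᶜ ≤ ENNReal.ofReal (Real.exp (-(α i * p))) := by
  rw [prob_compl_eq_one_sub .of_discrete, colorM_singleton_some, tsub_le_iff_right,
    ← ENNReal.ofReal_one]
  refine (ENNReal.ofReal_le_ofReal ?_).trans ENNReal.ofReal_add_le
  linarith [Real.add_one_le_exp (-(α i * p))]

theorem graphM_forall_ne_some_le [IsProbabilityMeasure (colorM q α p)] (i : Fin q)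
    (E : Finset (Fin n × Fin n)) :
    graphM n q α p {f | ∀ e ∈ E, f e ≠ some i} ≤
      ENNReal.ofReal (Real.exp (-(α i * p * #E))) := by
  calc graphM n q α p {f | ∀ e ∈ E, f e ≠ some i}
      = ∏ _e ∈ E, colorM q α p {some i}ᶜ :=
        Measure.pi_pi_finset (fun _ => colorM q α p) (fun _ => {some i}ᶜ) E
    _ = colorM q α p {some i}ᶜ ^ #E := Finset.prod_const _
    _ ≤ ENNReal.ofReal (Real.exp (-(α i * p))) ^ #E := by
      gcongr
      exact colorM_compl_singleton_some_le i
    _ = ENNReal.ofReal (Real.exp (-(α i * p * #E))) := by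
      rw [← ENNReal.ofReal_pow (Real.exp_nonneg _), ← Real.exp_nat_mul]
      ring_nf

/-- The event that the color `cᵢ` has a bipartite hole of size `m`: vertex sets `S ⊆ A` and
`T ⊆ B`, each of size at least `m`, spanning no edge of color `cᵢ`. The size is real so that it
can be a fraction of `n`. -/
def colorHole (n : ℕ) (i : Fin q) (m : ℝ) : Set (Fin n × Fin n → Option (Fin q)) :=
  {f | ∃ S T : Finset (Fin n), m ≤ #S ∧ m ≤ #T ∧ #{e ∈ S ×ˢ T | f e = some i} = 0}

theorem graphM_colorHole_le [IsProbabilityMeasure (colorM q α p)] {i : Fin q}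
    (hp : 0 ≤ α i * p) {m : ℝ} (hm : 0 ≤ m) :
    graphM n q α p (colorHole n i m) ≤
      ENNReal.ofReal (4 ^ n * Real.exp (-(α i * p * m ^ 2))) := by
  let large : Finset (Finset (Fin n) × Finset (Fin n)) := {x | m ≤ #x.1 ∧ m ≤ #x.2}
  have card_large_le : #large ≤ 4 ^ n := by
    calc #large ≤ Fintype.card (Finset (Fin n) × Finset (Fin n)) := Finset.card_le_univ _
      _ = 4 ^ n := by
        rw [Fintype.card_prod, Fintype.card_finset, Fintype.card_fin, ← mul_pow]
        norm_num
  have hole_subset_iUnion : colorHole n i m ⊆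
      ⋃ x ∈ large, {f | ∀ e ∈ x.1 ×ˢ x.2, f e ≠ some i} := by
    rintro f ⟨S, T, hS, hT, hf⟩
    rw [Finset.card_eq_zero, Finset.filter_eq_empty_iff] at hf
    exact Set.mem_biUnion (Finset.mem_filter_univ (S, T) |>.2 ⟨hS, hT⟩) hf
  have pair_le : ∀ x ∈ large, graphM n q α p {f | ∀ e ∈ x.1 ×ˢ x.2, f e ≠ some i} ≤
      ENNReal.ofReal (Real.exp (-(α i * p * m ^ 2))) := by
    intro x hx
    obtain ⟨hS, hT⟩ := (Finset.mem_filter_univ x).1 hx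
    refine (graphM_forall_ne_some_le i _).trans ?_
    rw [Finset.card_product, Nat.cast_mul, sq]
    gcongr
  calc graphM n q α p (colorHole n i m)
      ≤ ∑ x ∈ large, graphM n q α p {f | ∀ e ∈ x.1 ×ˢ x.2, f e ≠ some i} :=
        (measure_mono hole_subset_iUnion).trans (measure_biUnion_finset_le _ _)
    _ ≤ #large • ENNReal.ofReal (Real.exp (-(α i * p * m ^ 2))) :=
        Finset.sum_le_card_nsmul _ _ _ pair_le
    _ ≤ 4 ^ n • ENNReal.ofReal (Real.exp (-(α i * p * m ^ 2))) := by gcongr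
    _ = ENNReal.ofReal (4 ^ n * Real.exp (-(α i * p * m ^ 2))) := by
        rw [← ENNReal.ofReal_nsmul, nsmul_eq_mul, Nat.cast_pow, Nat.cast_ofNat]

end Graph

theorem tendsto_pow_mul_exp_neg_nat_mul_nhds_zero {x : ℕ → ℝ} (hx : Tendsto x atTop atTop) (b : ℝ) :
    Tendsto (fun n : ℕ => b ^ n * Real.exp (-(n * x n))) atTop (nhds 0) := by
  have base_tendsto : Tendsto (fun n => ‖b * Real.exp (-x n)‖) atTop (nhds 0) := by
    simpa using ((Real.tendsto_exp_neg_atTop_nhds_zero.comp hx).const_mul b).norm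
  refine squeeze_zero_norm' ?_ (tendsto_pow_atTop_nhds_zero_of_lt_one
    (r := (1 / 2 : ℝ)) (by norm_num) (by norm_num))
  filter_upwards [base_tendsto.eventually_le_const one_half_pos] with n hn
  rw [← mul_neg, Real.exp_nat_mul, ← mul_pow, norm_pow]
  gcongr

theorem tendsto_measure_compl_nhds_one {ι : Type*} {Ω : ι → Type*}
    [∀ k, MeasurableSpace (Ω k)] {μ : ∀ k, Measure (Ω k)} {s : ∀ k, Set (Ω k)} {l : Filter ι}
    (hμ : ∀ᶠ k in l, IsProbabilityMeasure (μ k)) (hs : ∀ k, MeasurableSet (s k))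
    (h : Tendsto (fun k => μ k (s k)) l (nhds 0)) :
    Tendsto (fun k => μ k (s k)ᶜ) l (nhds 1) := by
  have one_sub_tendsto : Tendsto (fun k => 1 - μ k (s k)) l (nhds 1) := by
    simpa using ENNReal.Tendsto.sub tendsto_const_nhds h (.inl ENNReal.one_ne_top)
  refine one_sub_tendsto.congr' ?_
  filter_upwards [hμ] with k _
  exact (prob_compl_eq_one_sub (hs k)).symm

section Threshold

variable {q : ℕ} {α : Fin q → ℝ} {δ : ℝ} {p : ℕ → ℝ}

theorem eventually_nonneg_of_tendsto_nat_mul (hp : Tendsto (fun n => n * p n) atTop atTop) :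
    ∀ᶠ n in atTop, 0 ≤ p n := by
  filter_upwards [hp.eventually_gt_atTop 0] with n hn
  exact (pos_of_mul_pos_right hn n.cast_nonneg).le

theorem tendsto_graphM_colorHole_nhds_zero
    (hprob : ∀ᶠ n in atTop, IsProbabilityMeasure (colorM q α (p n)))
    (hp : Tendsto (fun n => n * p n) atTop atTop) (hδ : 0 < δ) {i : Fin q} (hα : 0 < α i) :
    Tendsto (fun n => graphM n q α (p n) (colorHole n i (δ * n))) atTop (nhds 0) := by
  have bound_tendsto : Tendsto
      (fun n : ℕ => ENNReal.ofReal (4 ^ n * Real.exp (-(α i * p n * (δ * n) ^ 2))))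
      atTop (nhds 0) := by
    rw [← ENNReal.ofReal_zero]
    refine ENNReal.tendsto_ofReal ?_
    refine (tendsto_pow_mul_exp_neg_nat_mul_nhds_zero
      (hp.const_mul_atTop (show 0 < α i * δ ^ 2 by positivity)) 4).congr fun n => ?_
    ring_nf
  refine tendsto_of_tendsto_of_tendsto_of_le_of_le' tendsto_const_nhds bound_tendsto
    (.of_forall fun _ => zero_le) ?_
  filter_upwards [hprob, eventually_nonneg_of_tendsto_nat_mul hp] with n _ hp0
  exact graphM_colorHole_le (mul_nonneg hα.le hp0) (by positivity)

theorem lemma_f_general (hα : ∀ i, 0 < α i) (hsum : ∑ i, α i = 1) (hδ : 0 < δ)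
    (hp1 : ∀ᶠ n in atTop, p n ≤ 1) (hp : Tendsto (fun n => n * p n) atTop atTop) :
    Tendsto (fun n =>
      graphM n q α (p n)
        {f | ¬ ∃ (i : Fin q) (S T : Finset (Fin n)),
          δ * n ≤ (S.card : ℝ) ∧ δ * n ≤ (T.card : ℝ) ∧
          ((S ×ˢ T).filter fun e => f e = some i).card = 0})
      atTop (nhds 1) := by
  have hprob : ∀ᶠ n in atTop, IsProbabilityMeasure (colorM q α (p n)) := by
    filter_upwards [eventually_nonneg_of_tendsto_nat_mul hp, hp1] with n hp0 hp1
    exact isProbabilityMeasure_colorM (fun i => (hα i).le) hsum hp0 hp1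
  have union_tendsto : Tendsto (fun n => graphM n q α (p n) (⋃ i, colorHole n i (δ * n)))
      atTop (nhds 0) := by
    refine tendsto_of_tendsto_of_tendsto_of_le_of_le tendsto_const_nhds ?_
      (fun _ => zero_le) (fun _ => measure_iUnion_fintype_le _ _)
    simpa using tendsto_finsetSum Finset.univ
      fun i _ => tendsto_graphM_colorHole_nhds_zero hprob hp hδ (hα i)
  have compl_tendsto := tendsto_measure_compl_nhds_one
    (hprob.mono fun n _ => isProbabilityMeasure_graphM) (fun _ => .of_discrete) union_tendsto
  simpa only [colorHole, ← Set.ofPred_exists, Set.compl_ofPred] using compl_tendsto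

end Threshold

section LogDensity

variable {w : ℕ → ℝ}

theorem eventually_log_add_div_le_one (hw : w =O[atTop] fun n => Real.log n) :
    ∀ᶠ n : ℕ in atTop, (Real.log n + w n) / n ≤ 1 := by
  have add_isLittleO : (fun n : ℕ => Real.log n + w n) =o[atTop] fun n => (n : ℝ) :=
    ((isBigO_refl _ _).add hw).trans_isLittleO Real.isLittleO_log_id_atTop.natCast_atTop
  exact add_isLittleO.tendsto_div_nhds_zero.eventually_le_const one_pos

theorem tendsto_nat_mul_log_add_div (hw : Tendsto w atTop atTop) :
    Tendsto (fun n : ℕ => n * ((Real.log n + w n) / n)) atTop atTop := by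
  have add_tendsto : Tendsto (fun n : ℕ => Real.log n + w n) atTop atTop :=
    (Real.tendsto_log_atTop.comp tendsto_natCast_atTop_atTop).atTop_add_atTop hw
  refine add_tendsto.congr' ?_
  filter_upwards [eventually_ne_atTop 0] with n hn
  exact (mul_div_cancel₀ _ (Nat.cast_ne_zero.2 hn)).symm

end LogDensity

/-- Lemma 2(f): w.h.p. there are no color `i` and sets `S ⊆ A`, `T ⊆ B` with
`|S|, |T| ≥ βn/10` spanning no edge of color `cᵢ`. -/
theorem lemma_f (q : ℕ) (hq : 1 ≤ q) (α : Fin q → ℝ)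
    (hα : ∀ i, 0 < α i) (hsum : ∑ i, α i = 1)
    (β : ℝ) (hβ : 0 < β) (hβq : β < 1 / q)
    (w : ℕ → ℝ) (hw : Tendsto w atTop atTop)
    (hwo : w =o[atTop] fun n => Real.log n) :
    Tendsto (fun n =>
      graphM n q α ((Real.log n + w n) / n)
        {f | ¬ ∃ (i : Fin q) (S T : Finset (Fin n)),
          β * n / 10 ≤ (S.card : ℝ) ∧ β * n / 10 ≤ (T.card : ℝ) ∧
          ((S ×ˢ T).filter fun e => f e = some i).card = 0})
      atTop (nhds 1) := by
  have hδ : 0 < β / 10 := by positivity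
  simpa only [mul_div_right_comm] using lemma_f_general hα hsum hδ
    (eventually_log_add_div_le_one hwo.isBigO) (tendsto_nat_mul_log_add_div hw)
end

section
/- Let β ∈ (0,1) and α ∈ (0,1] be constants, set γ_b = 10·log(e/β)/α, and for each n ≥ 3 let k_n = ⌈10·log n/log log n⌉ and p_n = (log n + ω(n))/n where ω(n) → ∞ and ω(n) = o(log n). Then the sequence a_n = C(n, ⌊βn⌋)² · C(⌊βn⌋, ⌈n/log n⌉) · C(⌊βn⌋, ⌈γ_b·n/log n⌉) · [ C(⌈γ_b·n/log n⌉, k_n) · (α·p_n)^{k_n} ]^{⌈n/log n⌉} tends to 0 as n → ∞. -/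
open Filter

/-! The three binomial coefficients outside the bracket contribute at most `16 ^ n`. Inside the
bracket, the expected number `s q` of neighbours stays bounded, so for `k ≥ c L / log L` with
`L = log n` the union bound `C(s, k) q ^ k ≤ (e s q / k) ^ k` is at most `exp (-a L)` for any
`a < c`, because `k log k` is asymptotically at least `c L`. Raising it to a power at least `n / L`
gives `exp (-a n)`, which wins as soon as `log 16 < a < c`; here `c = 10`. -/

theorem choose_le_exp_one_mul_div_pow (s k : ℕ) :
    (s.choose k : ℝ) ≤ (Real.exp 1 * s / k) ^ k := by
  rcases k.eq_zero_or_pos with rfl | hk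
  · simp
  calc (s.choose k : ℝ) ≤ (s : ℝ) ^ k / k.factorial := Nat.choose_le_pow_div k s
    _ = (s / k : ℝ) ^ k * ((k : ℝ) ^ k / k.factorial) := by
      rw [div_pow]
      field_simp
    _ ≤ (s / k : ℝ) ^ k * Real.exp k := by
      gcongr
      exact Real.pow_div_factorial_le_exp _ k.cast_nonneg k
    _ = (Real.exp 1 * s / k) ^ k := by
      rw [← Real.exp_one_pow, ← mul_pow]
      ring

theorem abs_choose_mul_pow_le (s k : ℕ) (q : ℝ) :
    |(s.choose k : ℝ) * q ^ k| ≤ (Real.exp 1 * |s * q| / k) ^ k :=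
  calc |(s.choose k : ℝ) * q ^ k| = s.choose k * |q| ^ k := by simp [abs_mul]
    _ ≤ (Real.exp 1 * s / k) ^ k * |q| ^ k := by
      gcongr
      exact choose_le_exp_one_mul_div_pow s k
    _ = (Real.exp 1 * |s * q| / k) ^ k := by
      rw [← mul_pow, abs_mul, Nat.abs_cast]
      ring

theorem choose_sq_mul_choose_mul_choose_le_sixteen_pow (n m t s : ℕ) :
    n.choose m ^ 2 * m.choose t * m.choose s ≤ 16 ^ n := by
  rcases lt_or_ge n m with hnm | hmn
  · simp [Nat.choose_eq_zero_of_lt hnm]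
  have hm (r : ℕ) : m.choose r ≤ 2 ^ n :=
    (m.choose_le_two_pow r).trans (Nat.pow_le_pow_right two_pos hmn)
  calc n.choose m ^ 2 * m.choose t * m.choose s
      ≤ (2 ^ n) ^ 2 * 2 ^ n * 2 ^ n := by
        gcongr
        exacts [n.choose_le_two_pow m, hm t, hm s]
    _ = 16 ^ n := by
        rw [show 16 = 2 ^ 2 * 2 * 2 from rfl, mul_pow, mul_pow, pow_right_comm]

theorem exp_neg_mul_pow_le_exp_neg_mul {a x L : ℝ} {t : ℕ} (ha : 0 ≤ a) (hL : 0 < L)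
    (ht : x / L ≤ t) : Real.exp (-(a * L)) ^ t ≤ Real.exp (-(a * x)) := by
  rw [← Real.exp_nat_mul, Real.exp_le_exp, mul_neg, neg_le_neg_iff]
  calc a * x ≤ a * (t * L) := by
        gcongr
        exact (div_le_iff₀ hL).mp ht
    _ = t * (a * L) := by ring

theorem eventually_div_pow_le_exp_neg_mul (A : ℝ) {a c : ℝ} (ha : 0 ≤ a) (hac : a < c) :
    ∀ᶠ x : ℝ in atTop, ∀ k : ℕ, c * x / Real.log x ≤ k →
      (|A| / k) ^ k ≤ Real.exp (-(a * x)) := by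
  have hc : 0 < c := ha.trans_lt hac
  have hb : 0 < 1 - a / c := sub_pos.mpr ((div_lt_one hc).mpr hac)
  have hlinear := Real.tendsto_log_atTop.eventually
    (((isLittleO_pow_exp_pos_mul_atTop 1 hb).const_mul_left A).bound hc)
  filter_upwards [hlinear, eventually_gt_atTop 1] with x hAx hx k hk
  have hx0 : 0 < x := one_pos.trans hx
  have hlog : 0 < Real.log x := Real.log_pos hx
  have hk0 : (0 : ℝ) < k := lt_of_lt_of_le (by positivity) hk
  have hAlog : |A| * Real.log x ≤ c * Real.exp ((1 - a / c) * Real.log x) := by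
    simpa [abs_of_pos hlog] using hAx
  have hsplit : Real.exp ((1 - a / c) * Real.log x) = Real.exp (-(a / c * Real.log x)) * x := by
    conv_rhs => rw [← Real.exp_log hx0, Real.log_exp, ← Real.exp_add]
    ring_nf
  have hbase : |A| / k ≤ Real.exp (-(a / c * Real.log x)) := by
    rw [div_le_iff₀ hk0]
    calc |A| ≤ c * Real.exp ((1 - a / c) * Real.log x) / Real.log x :=
          (le_div_iff₀ hlog).mpr hAlog
      _ = Real.exp (-(a / c * Real.log x)) * (c * x / Real.log x) := by rw [hsplit]; ring
      _ ≤ Real.exp (-(a / c * Real.log x)) * k := by gcongr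
  calc (|A| / k) ^ k ≤ Real.exp (-(a / c * Real.log x)) ^ k := by gcongr
    _ ≤ Real.exp (-(a / c * (c * x))) :=
      exp_neg_mul_pow_le_exp_neg_mul (div_nonneg ha hc.le) hlog hk
    _ = Real.exp (-(a * x)) := by rw [← mul_assoc, div_mul_cancel₀ a hc.ne']

theorem eventually_abs_choose_mul_pow_le_exp_neg_mul {ι : Type*} {l : Filter ι} {L q : ι → ℝ}
    {s k : ι → ℕ} {a c : ℝ} (ha : 0 ≤ a) (hac : a < c) (hL : Tendsto L l atTop)
    (hsq : (fun i => (s i : ℝ) * q i) =O[l] (1 : ι → ℝ))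
    (hk : ∀ᶠ i in l, c * L i / Real.log (L i) ≤ k i) :
    ∀ᶠ i in l, |((s i).choose (k i) : ℝ) * q i ^ k i| ≤ Real.exp (-(a * L i)) := by
  obtain ⟨A, hA⟩ := hsq.bound
  filter_upwards [hA, hk, hL.eventually (eventually_div_pow_le_exp_neg_mul (Real.exp 1 * A) ha hac)]
    with i hAi hki hdecay
  have hsqA : |s i * q i| ≤ |A| := by
    simpa using hAi.trans (mul_le_mul_of_nonneg_right (le_abs_self A) (norm_nonneg _))
  calc |((s i).choose (k i) : ℝ) * q i ^ k i|
      ≤ (Real.exp 1 * |s i * q i| / k i) ^ k i := abs_choose_mul_pow_le _ _ _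
    _ ≤ (Real.exp 1 * |A| / k i) ^ k i := by gcongr
    _ = (|Real.exp 1 * A| / k i) ^ k i := by rw [abs_mul, Real.abs_exp]
    _ ≤ Real.exp (-(a * L i)) := hdecay _ hki

theorem lemma_c_estimate_general {c : ℝ} (hc : Real.log 16 < c) {L : ℕ → ℝ}
    (hL : Tendsto L atTop atTop) (m : ℕ → ℕ) {s k t : ℕ → ℕ} {q : ℕ → ℝ}
    (hsq : (fun n => (s n : ℝ) * q n) =O[atTop] (1 : ℕ → ℝ))
    (hk : ∀ᶠ n in atTop, c * L n / Real.log (L n) ≤ k n)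
    (ht : ∀ᶠ n in atTop, n / L n ≤ t n) :
    Tendsto (fun n : ℕ =>
      (n.choose (m n) : ℝ) ^ 2 * ((m n).choose (t n) : ℝ) * ((m n).choose (s n) : ℝ) *
        (((s n).choose (k n) : ℝ) * q n ^ k n) ^ t n)
      atTop (nhds 0) := by
  obtain ⟨a, hlog_a, hac⟩ := exists_between hc
  have ha : 0 ≤ a := (Real.log_nonneg (by norm_num)).trans hlog_a.le
  have hratio : 16 * Real.exp (-a) < 1 := by
    rw [Real.exp_neg, ← div_eq_mul_inv, div_lt_one (Real.exp_pos a)]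
    exact (Real.log_lt_iff_lt_exp (by norm_num)).mp hlog_a
  refine squeeze_zero_norm' ?_ (tendsto_pow_atTop_nhds_zero_of_lt_one (by positivity) hratio)
  filter_upwards [eventually_abs_choose_mul_pow_le_exp_neg_mul ha hac hL hsq hk, ht,
    hL.eventually_gt_atTop 0] with n hbracket htn hLn
  have houter : (n.choose (m n) : ℝ) ^ 2 * (m n).choose (t n) * (m n).choose (s n) ≤ 16 ^ n :=
    mod_cast choose_sq_mul_choose_mul_choose_le_sixteen_pow n (m n) (t n) (s n)
  rw [norm_mul, norm_pow, Real.norm_eq_abs (_ * q n ^ k n), Real.norm_of_nonneg (by positivity)]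
  calc _ ≤ 16 ^ n * Real.exp (-(a * L n)) ^ t n := by gcongr
    _ ≤ 16 ^ n * Real.exp (-(a * n)) := by
      gcongr
      exact exp_neg_mul_pow_le_exp_neg_mul ha hLn htn
    _ = (16 * Real.exp (-a)) ^ n := by rw [mul_pow, ← Real.exp_nat_mul]; ring_nf

theorem isBigO_natCeil {ι : Type*} {l : Filter ι} {f g : ι → ℝ} (hf : f =O[l] g)
    (hg : (1 : ι → ℝ) =O[l] g) : (fun i => (⌈f i⌉₊ : ℝ)) =O[l] g := by
  have hceil (i : ι) : ‖(⌈f i⌉₊ : ℝ)‖ ≤ |f i| + 1 := by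
    rw [Real.norm_natCast]
    calc (⌈f i⌉₊ : ℝ) ≤ ⌈|f i|⌉₊ := mod_cast Nat.ceil_mono (le_abs_self _)
      _ ≤ |f i| + 1 := (Nat.ceil_lt_add_one (abs_nonneg _)).le
  exact (Asymptotics.IsBigO.of_norm_le hceil).trans (hf.abs_left.add hg)

theorem tendsto_log_natCast_atTop : Tendsto (fun n : ℕ => Real.log n) atTop atTop :=
  Real.tendsto_log_atTop.comp tendsto_natCast_atTop_atTop

theorem isBigO_one_natCeil_div_log_mul (γ α : ℝ) {w : ℕ → ℝ}
    (hw : w =O[atTop] fun n => Real.log n) :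
    (fun n : ℕ => (⌈γ * n / Real.log n⌉₊ : ℝ) * (α * ((Real.log n + w n) / n)))
      =O[atTop] (1 : ℕ → ℝ) := by
  have hone : (1 : ℕ → ℝ) =O[atTop] fun n : ℕ => n / Real.log n := by
    refine .of_norm_eventuallyLE ?_
    filter_upwards [tendsto_log_natCast_atTop.eventually_gt_atTop 0] with n hn
    simpa [one_le_div hn] using Real.log_le_self n.cast_nonneg
  have hs : (fun n : ℕ => (⌈γ * n / Real.log n⌉₊ : ℝ)) =O[atTop] fun n : ℕ => n / Real.log n := by
    refine isBigO_natCeil ?_ hone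
    simp only [mul_div_assoc]
    exact Asymptotics.isBigO_const_mul_self γ _ _
  have hq : (fun n : ℕ => α * ((Real.log n + w n) / n)) =O[atTop]
      fun n : ℕ => Real.log n / n := by
    simp only [div_eq_mul_inv]
    exact (((Asymptotics.isBigO_refl _ _).add hw).mul
      (Asymptotics.isBigO_refl _ _)).const_mul_left α
  refine (hs.mul hq).congr' .rfl ?_
  filter_upwards [tendsto_log_natCast_atTop.eventually_gt_atTop 0, eventually_gt_atTop 0]
    with n hn hn0
  rw [Pi.one_apply]
  field_simp

/-- with `γ_b = 10 log(e/β)/α`, `k_n = ⌈10 log n/log log n⌉` and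
`p_n = (log n + ω(n))/n`, the union-bound estimate of Lemma 2(c),
`C(n,⌊βn⌋)² · C(⌊βn⌋,⌈n/log n⌉) · C(⌊βn⌋,⌈γ_b n/log n⌉) ·
  (C(⌈γ_b n/log n⌉, k_n) · (α p_n)^{k_n})^{⌈n/log n⌉}`, tends to `0`. -/
theorem lemma_c_estimate (β α γb : ℝ) (hβ : 0 < β) (hβ1 : β < 1)
    (hα : 0 < α) (hα1 : α ≤ 1) (hγb : γb = 10 * Real.log (Real.exp 1 / β) / α)
    (w : ℕ → ℝ) (hw : Tendsto w atTop atTop)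
    (hwo : w =o[atTop] fun n => Real.log n)
    (p : ℕ → ℝ) (hp : ∀ n : ℕ, p n = (Real.log n + w n) / n)
    (k : ℕ → ℕ) (hk : ∀ n : ℕ, k n = ⌈10 * Real.log n / Real.log (Real.log n)⌉₊) :
    Tendsto (fun n : ℕ =>
      ((n.choose ⌊β * n⌋₊ : ℝ)) ^ 2 * ((⌊β * n⌋₊).choose ⌈(n : ℝ) / Real.log n⌉₊ : ℝ) *
        ((⌊β * n⌋₊).choose ⌈γb * n / Real.log n⌉₊ : ℝ) *
        (((⌈γb * n / Real.log n⌉₊).choose (k n) : ℝ) * (α * p n) ^ (k n)) ^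
          ⌈(n : ℝ) / Real.log n⌉₊)
      atTop (nhds 0) := by
  have hlog16 : Real.log 16 < 10 := by
    rw [show (16 : ℝ) = 2 ^ 4 by norm_num, Real.log_pow, Nat.cast_ofNat]
    linarith [Real.log_two_lt_d9]
  have hsq : (fun n : ℕ => (⌈γb * n / Real.log n⌉₊ : ℝ) * (α * p n)) =O[atTop] (1 : ℕ → ℝ) := by
    simpa only [hp] using isBigO_one_natCeil_div_log_mul γb α hwo.isBigO
  exact lemma_c_estimate_general hlog16 tendsto_log_natCast_atTop _ hsq
    (.of_forall fun n => hk n ▸ Nat.le_ceil _) (.of_forall fun _ => Nat.le_ceil _)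
end
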